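/- Let G be a 4-connected plane triangulation with a proper 3-colouring into classes B, W, R, let v be a white vertex, and let n(v) be a red neighbour of v. Then the set (N(v) ∩ B) ∪ {v} induces a star in G with centre v, and the set N(v) \ {n(v)} induces a path in G; moreover the pair (induced path on N(v)\{n(v)}, induced star on (N(n'(v)) ∩ W) ∪ {n'(v)}) for an appropriate choice is disjoint when the relevant vertices are far apart. -/

import Mathlib

/-- A combinatorial plane triangulation: a simple graph together with its set of
triangular faces, each edge on exactly two faces, satisfying Euler's formula. -/
structure PlaneTriangulation (V : Type*) [Fintype V] [DecidableEq V] where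
  G : SimpleGraph V
  faces : Finset (Finset V)
  face_card : ∀ f ∈ faces, f.card = 3
  face_clique : ∀ f ∈ faces, ∀ a ∈ f, ∀ b ∈ f, a ≠ b → G.Adj a b
  edge_two_faces : ∀ a b : V, G.Adj a b → (faces.filter (fun f => a ∈ f ∧ b ∈ f)).card = 2
  euler : (Fintype.card V : ℤ) - (G.edgeSet.ncard : ℤ) + (faces.card : ℤ) = 2

/-- The degree of a vertex. -/
noncomputable def PlaneTriangulation.deg {V : Type*} [Fintype V] [DecidableEq V]
    (T : PlaneTriangulation V) (v : V) : ℕ := (T.G.neighborSet v).ncard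

/-- Membership in the family `E(4)`, witnessed by a proper `3`-colouring
`{B, W, R}` in which every red vertex has degree `4`. -/
def PlaneTriangulation.IsE4Coloring {V : Type*} [Fintype V] [DecidableEq V]
    (T : PlaneTriangulation V) (B W R : Set V) : Prop :=
  B ∪ W ∪ R = Set.univ ∧ Disjoint B W ∧ Disjoint B R ∧ Disjoint W R ∧
  (∀ a ∈ B, ∀ b ∈ B, ¬ T.G.Adj a b) ∧
  (∀ a ∈ W, ∀ b ∈ W, ¬ T.G.Adj a b) ∧
  (∀ a ∈ R, ∀ b ∈ R, ¬ T.G.Adj a b) ∧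
  (∀ v ∈ R, T.deg v = 4)

def FourConnected {V : Type*} [Fintype V] (G : SimpleGraph V) : Prop :=
  5 ≤ Fintype.card V ∧ ∀ S : Set V, S.ncard ≤ 3 → (G.induce Sᶜ).Connected

/-- A graph is a path graph: a nonempty tree in which every vertex has degree at most 2. -/
def IsPathGraph {α : Type*} (H : SimpleGraph α) : Prop :=
  H.IsTree ∧ ∀ u : α, (H.neighborSet u).ncard ≤ 2

/-- `S` induces a star in `G` with centre `v`: `v ∈ S`, `v` is adjacent to every
other vertex of `S`, and the remaining vertices are pairwise non-adjacent. -/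
def InducesStar {V : Type*} (G : SimpleGraph V) (S : Set V) (v : V) : Prop :=
  v ∈ S ∧ (∀ u ∈ S, u ≠ v → G.Adj v u) ∧
    ∀ u ∈ S, ∀ w ∈ S, u ≠ v → w ≠ v → ¬ G.Adj u w

/-!
The axioms of a `PlaneTriangulation` describe only a union of closed triangulated surfaces glued
along vertices. Normalise it by splitting each vertex into its umbrellas, the classes of darts that
turn into one another across faces; the components of the result are the sheets.
Homology modulo two gives `|umbrellas| - |E| + |F| ≤ 2 |sheets|`, so by Euler's formula
`|umbrellas| + 2 ≤ |V| + 2 |sheets|`. If there were several sheets, 4-connectedness would make each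
of them share at least four vertices with the others, and counting vertices with multiplicity
contradicts this bound. Hence there is one sheet, every vertex has one umbrella and the first
homology vanishes. So a triangle is the boundary of a chain of faces; removing the vertices of the
triangle leaves `G` connected, so were the triangle not itself a face, the chain would be constant
and its boundary zero. Thus all triangles are faces: the link of a vertex is 2-regular, and it is
connected because there is one umbrella, so it is a cycle, and a cycle minus a vertex is a path.
-/

section Graph

open Finset

variable {α β : Type*}

theorem of_preconnected_of_adj {H : SimpleGraph α} (hH : H.Preconnected) {p : α → Prop}
    (hp : ∀ x y, H.Adj x y → p x → p y) {x : α} (hx : p x) (y : α) : p y := by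
  have hxy := (H.reachable_iff_reflTransGen x y).1 (hH x y)
  induction hxy with
  | refl => exact hx
  | tail _ hadj ih => exact hp _ _ hadj ih

theorem FourConnected.connected [Fintype α] {H : SimpleGraph α} (hH : FourConnected H) :
    H.Connected := by
  have h := hH.2 ∅ (by simp)
  rw [Set.compl_empty] at h
  exact H.induceUnivIso.connected_iff.1 h

theorem FourConnected.exists_adj [Fintype α] {H : SimpleGraph α} (hH : FourConnected H) (a : α) :
    ∃ b, H.Adj a b := by
  have : Nontrivial α := Fintype.one_lt_card_iff_nontrivial.1 (by have := hH.1; omega)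
  exact hH.connected.preconnected.exists_adj_of_nontrivial a

theorem inducesStar_neighborSet_inter_union {H : SimpleGraph α} {B : Set α}
    (hB : H.IsIndepSet B) (v : α) : InducesStar H ((H.neighborSet v ∩ B) ∪ {v}) v := by
  have mem_of_ne {u : α} (hu : u ∈ (H.neighborSet v ∩ B) ∪ {v}) (huv : u ≠ v) :
      u ∈ H.neighborSet v ∩ B := hu.resolve_right huv
  refine ⟨Or.inr rfl, fun u hu huv => (mem_of_ne hu huv).1, fun u hu w hw huv hwv huw => ?_⟩
  exact hB (mem_of_ne hu huv).2 (mem_of_ne hw hwv).2 huw.ne huw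

theorem exists_dart_of_isNClique_three [DecidableEq α] {H : SimpleGraph α} {t : Finset α}
    (ht : H.IsNClique 3 t) {d : H.Dart} (h₁ : d.fst ∈ t) (h₂ : d.snd ∈ t) :
    ∃ e : H.Dart, e.fst = d.fst ∧ e.snd ≠ d.snd ∧ t = {d.fst, d.snd, e.snd} := by
  obtain ⟨c, hc, hc'⟩ := Finset.exists_mem_notMem_of_card_lt_card (s := {d.fst, d.snd}) (t := t)
    (by rw [card_pair d.adj.ne, ht.card_eq]; omega)
  simp only [mem_insert, mem_singleton, not_or] at hc'
  refine ⟨⟨(d.fst, c), ht.isClique h₁ hc (Ne.symm hc'.1)⟩, rfl, hc'.2, ?_⟩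
  refine (eq_of_subset_of_card_le ?_ ?_).symm
  · grind
  · rw [ht.card_eq, card_eq_three.2 ⟨_, _, _, d.adj.ne, Ne.symm hc'.1, Ne.symm hc'.2, rfl⟩]

theorem IsPathGraph.of_iso {H : SimpleGraph α} {K : SimpleGraph β} (hH : IsPathGraph H)
    (e : H ≃g K) : IsPathGraph K := by
  refine ⟨e.isTree_iff.1 hH.1, fun u => ?_⟩
  rw [Set.ncard_congr' (e.symm.mapNeighborSet u)]
  exact hH.2 (e.symm u)

/-- Removing a vertex of `s` from the subgraph induced on `s` leaves the subgraph induced on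
`s \ {a}`. -/
def induceDiffSingletonIso (H : SimpleGraph α) {s : Set α} {a : α} (ha : a ∈ s) :
    (H.induce s).induce {(⟨a, ha⟩ : s)}ᶜ ≃g H.induce (s \ {a}) where
  toFun x := ⟨x.1.1, x.1.2, fun h => x.2 (Subtype.ext h)⟩
  invFun x := ⟨⟨x.1, x.2.1⟩, fun h => x.2.2 (congrArg Subtype.val h)⟩
  map_rel_iff' := Iff.rfl

theorem induce_deleteEdges_compl_singleton (H : SimpleGraph α) (a b : α) :
    (H.deleteEdges {s(a, b)}).induce {a}ᶜ = H.induce {a}ᶜ := by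
  ext x y
  have hx : x.1 ≠ a := x.2
  have hy : y.1 ≠ a := y.2
  simp [SimpleGraph.deleteEdges_adj, hx, hy]

section TwoRegular

variable [Finite α] {H : SimpleGraph α}

theorem card_edgeSet_of_ncard_neighborSet_eq_two (h2 : ∀ a, (H.neighborSet a).ncard = 2) :
    Nat.card H.edgeSet = Nat.card α := by
  classical
  have := Fintype.ofFinite α
  have hdeg (a : α) : H.degree a = 2 := by
    rw [← h2 a, Set.ncard_eq_toFinset_card', Set.toFinset_card, H.card_neighborSet_eq_degree]
  have h := H.sum_degrees_eq_twice_card_edges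
  simp only [hdeg, sum_const, card_univ, smul_eq_mul] at h
  rw [Nat.card_eq_fintype_card, Nat.card_eq_fintype_card, ← H.edgeFinset_card]
  omega

theorem isTree_deleteEdges_of_ncard_neighborSet_eq_two (hconn : H.Connected)
    (h2 : ∀ a, (H.neighborSet a).ncard = 2) {a b : α} (hab : H.Adj a b) :
    (H.deleteEdges {s(a, b)}).IsTree := by
  have hcyc : H.IsCycles := fun a _ => h2 a
  refine SimpleGraph.isTree_iff_connected_and_card.2 ⟨?_, ?_⟩
  · exact hconn.connected_delete_edge_of_not_isBridge
      (by rw [SimpleGraph.isBridge_iff, not_not]; exact hcyc.reachable_deleteEdges hab)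
  · rw [Nat.card_coe_set_eq, SimpleGraph.edgeSet_deleteEdges,
      Set.ncard_sdiff_singleton_add_one (by simpa using hab), ← Nat.card_coe_set_eq,
      card_edgeSet_of_ncard_neighborSet_eq_two h2]

theorem isPathGraph_induce_compl_singleton (hconn : H.Connected)
    (h2 : ∀ a, (H.neighborSet a).ncard = 2) (a : α) : IsPathGraph (H.induce {a}ᶜ) := by
  classical
  have := Fintype.ofFinite α
  obtain ⟨b, c, hbc, hN⟩ := Set.ncard_eq_two.1 (h2 a)
  have hadj (w : α) : H.Adj a w ↔ w = b ∨ w = c := by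
    rw [← SimpleGraph.mem_neighborSet, hN]; rfl
  have htree := isTree_deleteEdges_of_ncard_neighborSet_eq_two hconn h2 ((hadj b).2 (Or.inl rfl))
  have hleaf : (H.deleteEdges {s(a, b)}).degree a = 1 := by
    refine SimpleGraph.degree_eq_one_iff_existsUnique_adj.2 ⟨c, ?_, fun w hw => ?_⟩ <;>
      simp only [SimpleGraph.deleteEdges_adj, hadj, Set.mem_singleton_iff] at * <;> grind
  refine ⟨?_, fun u => ?_⟩
  · rw [← induce_deleteEdges_compl_singleton H a b]
    exact ⟨htree.connected.induce_compl_singleton_of_degree_eq_one hleaf, htree.isAcyclic.induce _⟩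
  · rw [← h2 u.1]
    exact Set.ncard_le_ncard_of_injOn Subtype.val (fun _ h => h) Subtype.val_injective.injOn

end TwoRegular

end Graph

section Counting

open Finset

theorem card_filter_exists_ne_add_two_le {ι : Type*} [DecidableEq ι] {s : Finset ι}
    (hs : s.Nonempty) :
    #{i ∈ s | ∃ j ∈ s, j ≠ i} + 2 ≤ 2 * #s := by
  obtain ⟨i, rfl⟩ | hs' := hs.exists_eq_singleton_or_nontrivial
  · simp
  · have hle := card_filter_le s fun i => ∃ j ∈ s, j ≠ i
    have := one_lt_card_iff_nontrivial.2 hs'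
    omega

theorem mul_card_add_two_mul_card_le {ι V : Type*} [Fintype ι] [DecidableEq ι] [Fintype V]
    [DecidableEq V] {m : ℕ} {A : ι → Finset V} (hcover : ∀ a, ∃ i, a ∈ A i)
    (hshared : ∀ i, m ≤ #{a ∈ A i | ∃ j ≠ i, a ∈ A j}) :
    m * Fintype.card ι + 2 * Fintype.card V ≤ 2 * ∑ i, #(A i) := by
  have hpoint (a : V) :
      #{i | a ∈ A i ∧ ∃ j ≠ i, a ∈ A j} + 2 ≤ 2 * #{i | a ∈ A i} := by
    obtain ⟨i, hi⟩ := hcover a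
    convert card_filter_exists_ne_add_two_le (s := {i | a ∈ A i}) ⟨i, by simpa using hi⟩ using 3
    ext i
    simp [and_comm]
  have hswap := sum_card_bipartiteAbove_eq_sum_card_bipartiteBelow (s := univ) (t := univ)
    fun (i : ι) (a : V) => a ∈ A i
  have hswap' := sum_card_bipartiteAbove_eq_sum_card_bipartiteBelow (s := univ) (t := univ)
    fun (i : ι) (a : V) => a ∈ A i ∧ ∃ j ≠ i, a ∈ A j
  simp only [bipartiteAbove, bipartiteBelow, filter_univ_mem, ← filter_filter] at hswap hswap'
  calc m * Fintype.card ι + 2 * Fintype.card V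
      ≤ ∑ i, #{a ∈ A i | ∃ j ≠ i, a ∈ A j} + ∑ _a : V, 2 := by
        have := card_nsmul_le_sum univ _ m fun i _ => hshared i
        simp only [card_univ, smul_eq_mul, sum_const] at this ⊢
        linarith
    _ = ∑ a : V, (#{i | a ∈ A i ∧ ∃ j ≠ i, a ∈ A j} + 2) := by
        rw [sum_add_distrib, hswap']
        simp only [filter_filter]
    _ ≤ ∑ a, 2 * #{i | a ∈ A i} := sum_le_sum fun a _ => hpoint a
    _ = 2 * ∑ i, #(A i) := by rw [← mul_sum, hswap]

end Counting

open Matrix in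
theorem card_le_rank_add_card_of_factorsThrough {K m n κ : Type*} [Field K] [Fintype n] [Fintype κ]
    (A : Matrix m n K) (π : n → κ) (hA : ∀ g, A *ᵥ g = 0 → ∃ h : κ → K, g = h ∘ π) :
    Fintype.card n ≤ A.rank + Fintype.card κ := by
  have hker : LinearMap.ker A.mulVecLin ≤ LinearMap.range (LinearMap.funLeft K K π) := by
    intro g hg
    obtain ⟨h, rfl⟩ := hA g hg
    exact ⟨h, rfl⟩
  calc Fintype.card n = A.rank + Module.finrank K (LinearMap.ker A.mulVecLin) := by
        rw [Matrix.rank, A.mulVecLin.finrank_range_add_finrank_ker,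
          Module.finrank_fintype_fun_eq_card]
    _ ≤ A.rank + Module.finrank K (LinearMap.range (LinearMap.funLeft K K π)) := by
        gcongr
        exact Submodule.finrank_mono hker
    _ ≤ A.rank + Fintype.card κ := by
        gcongr
        exact (LinearMap.finrank_range_le _).trans_eq (Module.finrank_fintype_fun_eq_card K)

namespace PlaneTriangulation

open Finset Matrix

variable {V : Type*} [Fintype V] [DecidableEq V] (T : PlaneTriangulation V)

noncomputable instance : DecidableRel T.G.Adj := Classical.decRel _

/-- Two darts with a common tail are consecutive around it if they span a face. -/
def Consecutive (d e : T.G.Dart) : Prop :=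
  d.fst = e.fst ∧ {d.fst, d.snd, e.snd} ∈ T.faces

/-- The umbrellas: classes of darts under rotation about their tails. They are the vertices of the
normalised surface, so several umbrellas may share a tail. -/
def Umbrella : Type _ := Quot T.Consecutive

/-- The sheets: classes of darts under rotation and reversal. They are the connected components of
the normalised surface. -/
def Sheet : Type _ := Quot fun d e : T.G.Dart => T.Consecutive d e ∨ e = d.symm

/-- The umbrella of a dart, as the end of the dart in the normalised surface. -/
def umbrella (d : T.G.Dart) : T.Umbrella := Quot.mk _ d

/-- The sheet of a dart, as the component of the normalised surface carrying it. -/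
def sheet (d : T.G.Dart) : T.Sheet := Quot.mk _ d

/-- The sheet containing an umbrella. -/
def umbrellaSheet : T.Umbrella → T.Sheet := Quot.map id fun _ _ => Or.inl

/-- The tail shared by the darts of an umbrella: the normalisation map on vertices. -/
def umbrellaTail : T.Umbrella → V := Quot.lift (fun d => d.fst) fun _ _ h => h.1

noncomputable instance : Fintype T.Umbrella :=
  have : Finite T.Umbrella := inferInstanceAs (Finite (Quot _))
  Fintype.ofFinite _

noncomputable instance : Fintype T.Sheet :=
  have : Finite T.Sheet := inferInstanceAs (Finite (Quot _))
  Fintype.ofFinite _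

noncomputable instance : DecidableEq T.Umbrella := Classical.decEq _

noncomputable instance : DecidableEq T.Sheet := Classical.decEq _

variable {T}

theorem Consecutive.symm {d e : T.G.Dart} (h : T.Consecutive d e) : T.Consecutive e d :=
  ⟨h.1.symm, by rw [← h.1, pair_comm]; exact h.2⟩

theorem Consecutive.umbrella_eq {d e : T.G.Dart} (h : T.Consecutive d e) :
    T.umbrella d = T.umbrella e :=
  Quot.sound h

theorem Consecutive.sheet_eq {d e : T.G.Dart} (h : T.Consecutive d e) : T.sheet d = T.sheet e :=
  Quot.sound (Or.inl h)

theorem sheet_symm (d : T.G.Dart) : T.sheet d.symm = T.sheet d :=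
  (Quot.sound (r := fun d e : T.G.Dart => T.Consecutive d e ∨ e = d.symm) (Or.inr rfl)).symm

theorem of_consecutive_of_fst_eq (hU : Function.Injective T.umbrellaTail) {a : V}
    {p : T.G.Dart → Prop} (hp : ∀ d e, d.fst = a → T.Consecutive d e → p d → p e)
    {d e : T.G.Dart} (hd : d.fst = a) (he : e.fst = a) (h : p d) : p e := by
  have hgen : Relation.EqvGen T.Consecutive d e :=
    Quot.eqvGen_exact (hU (hd.trans he.symm : T.umbrellaTail (T.umbrella d) = _))
  suffices ∀ d e, Relation.EqvGen T.Consecutive d e → d.fst = e.fst ∧ (d.fst = a → (p d ↔ p e)) from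
    ((this d e hgen).2 hd).1 h
  intro d e hgen
  induction hgen with
  | rel d e h => exact ⟨h.1, fun hd => ⟨hp d e hd h, hp e d (h.1 ▸ hd) h.symm⟩⟩
  | refl => exact ⟨rfl, fun _ => Iff.rfl⟩
  | symm _ _ _ ih => exact ⟨ih.1.symm, fun hd => (ih.2 (ih.1.trans hd)).symm⟩
  | trans _ _ _ _ _ ih ih' =>
    exact ⟨ih.1.trans ih'.1, fun hd => (ih.2 hd).trans (ih'.2 (ih.1 ▸ hd))⟩

theorem isNClique_of_mem_faces {f : Finset V} (hf : f ∈ T.faces) : T.G.IsNClique 3 f :=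
  ⟨fun _ ha _ hb hab => T.face_clique f hf _ ha _ hb hab, T.face_card f hf⟩

theorem exists_dart_of_mem_face (f : T.faces) {a : V} (ha : a ∈ f.1) :
    ∃ d : T.G.Dart, d.fst = a ∧ d.snd ∈ f.1 := by
  obtain ⟨b, hb, hba⟩ := exists_mem_ne (by rw [T.face_card f.1 f.2]; omega) a
  exact ⟨⟨(a, b), T.face_clique f.1 f.2 a ha b hb hba.symm⟩, rfl, hb⟩

variable (T)

/-- The two faces on either side of a dart. -/
noncomputable def dartFaces (d : T.G.Dart) : Finset T.faces := {f | d.fst ∈ f.1 ∧ d.snd ∈ f.1}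

variable {T}

@[simp] theorem mem_dartFaces {d : T.G.Dart} {f : T.faces} :
    f ∈ T.dartFaces d ↔ d.fst ∈ f.1 ∧ d.snd ∈ f.1 := by
  simp [dartFaces]

theorem card_dartFaces (d : T.G.Dart) : #(T.dartFaces d) = 2 := by
  rw [← T.edge_two_faces _ _ d.adj]
  refine card_bij (fun f _ => f.1) (by simp) (fun _ _ _ _ => Subtype.ext) ?_
  simp +contextual

theorem dartFaces_symm (d : T.G.Dart) : T.dartFaces d.symm = T.dartFaces d := by
  ext f
  simp [and_comm]

theorem Consecutive.exists_mem_dartFaces {d e : T.G.Dart} (h : T.Consecutive d e) :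
    ∃ f, f ∈ T.dartFaces d ∧ f ∈ T.dartFaces e :=
  ⟨⟨_, h.2⟩, by simp [h.1]⟩

variable (T)

/-- The edge underlying a dart. -/
def dartEdge (d : T.G.Dart) : T.G.edgeSet := ⟨d.edge, d.edge_mem⟩

/-- The incidence matrix modulo two of the normalised surface, sending each edge to the sum of the
umbrellas at its two ends. -/
noncomputable def incidence : Matrix T.Umbrella T.G.edgeSet (ZMod 2) :=
  Matrix.of fun x e => ∑ d : T.G.Dart with d.edge = e.1, if x = T.umbrella d then 1 else 0

/-- The edges spanned by a vertex set, as a chain modulo two. -/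
noncomputable def edgeChain (t : Finset V) (e : T.G.edgeSet) : ZMod 2 :=
  if ∀ a ∈ e.1, a ∈ t then 1 else 0

/-- The boundary matrix modulo two, sending each face to the sum of its edges. -/
noncomputable def boundary : Matrix T.G.edgeSet T.faces (ZMod 2) :=
  Matrix.of fun e f => T.edgeChain f.1 e

theorem incidence_col (d : T.G.Dart) :
    T.incidence.col (T.dartEdge d) =
      Pi.single (T.umbrella d) 1 + Pi.single (T.umbrella d.symm) 1 := by
  funext x
  simp only [incidence, dartEdge, Matrix.col_apply, Matrix.of_apply, d.edge_fiber,
    sum_pair d.symm_ne.symm, Pi.add_apply, Pi.single_apply]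

theorem incidence_transpose_mulVec (g : T.Umbrella → ZMod 2) (d : T.G.Dart) :
    (T.incidenceᵀ *ᵥ g) (T.dartEdge d) = g (T.umbrella d) + g (T.umbrella d.symm) := by
  change T.incidence.col (T.dartEdge d) ⬝ᵥ g = _
  rw [incidence_col, add_dotProduct, single_one_dotProduct, single_one_dotProduct]

theorem edgeChain_dartEdge (t : Finset V) (d : T.G.Dart) :
    T.edgeChain t (T.dartEdge d) = if d.fst ∈ t ∧ d.snd ∈ t then 1 else 0 := by
  have hball : (∀ a ∈ (T.dartEdge d).1, a ∈ t) ↔ d.fst ∈ t ∧ d.snd ∈ t := Sym2.ball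
  simp only [edgeChain, hball]

theorem boundary_mulVec_dartEdge (s : T.faces → ZMod 2) (d : T.G.Dart) :
    (T.boundary *ᵥ s) (T.dartEdge d) = ∑ f ∈ T.dartFaces d, s f := by
  simp only [boundary, Matrix.mulVec, dotProduct, Matrix.of_apply, edgeChain_dartEdge, ite_mul,
    one_mul, zero_mul, dartFaces, sum_filter]

theorem edgeChain_triple {a b c : V} (hab : T.G.Adj a b) (hbc : T.G.Adj b c)
    (hca : T.G.Adj c a) :
    T.edgeChain {a, b, c} = Pi.single (T.dartEdge ⟨(a, b), hab⟩) 1 +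
      Pi.single (T.dartEdge ⟨(b, c), hbc⟩) 1 + Pi.single (T.dartEdge ⟨(c, a), hca⟩) 1 := by
  have := hab.ne
  have := hbc.ne
  have := hca.ne
  ext ⟨e, he⟩
  induction e with | _ x y
  have hxy : x ≠ y := SimpleGraph.Adj.ne he
  simp only [edgeChain, Sym2.ball, mem_insert, mem_singleton, Pi.add_apply, Pi.single_apply,
    dartEdge, Subtype.mk.injEq, SimpleGraph.Dart.edge, Sym2.mk, Sym2.eq_iff]
  grind

variable {T}

theorem incidence_mulVec_edgeChain {t : Finset V} (ht : T.G.IsNClique 3 t)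
    (hcorner : ∀ d e : T.G.Dart, d.fst = e.fst → {d.fst, d.snd, e.snd} = t →
      T.umbrella d = T.umbrella e) :
    T.incidence *ᵥ T.edgeChain t = 0 := by
  obtain ⟨a, b, c, hab, hac, hbc, rfl⟩ := SimpleGraph.is3Clique_iff.1 ht
  have ha := hcorner ⟨(a, b), hab⟩ ⟨(a, c), hac⟩ rfl rfl
  have hb := hcorner ⟨(b, c), hbc⟩ ⟨(b, a), hab.symm⟩ rfl (by grind)
  have hc := hcorner ⟨(c, a), hac.symm⟩ ⟨(c, b), hbc.symm⟩ rfl (by grind)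
  simp only [T.edgeChain_triple hab hbc hac.symm, mulVec_add, mulVec_single_one, incidence_col,
    SimpleGraph.Dart.symm_mk, Prod.swap_prod_mk, ha, hb, hc]
  have cancel (x y z : T.Umbrella → ZMod 2) : x + y + (y + z) + (z + x) = 0 :=
    calc x + y + (y + z) + (z + x) = (x + x) + (y + y) + (z + z) := by abel
      _ = 0 := by simp only [ZModModule.add_self]
  exact cancel _ _ _

theorem incidence_mul_boundary : T.incidence * T.boundary = 0 := by
  ext x f
  exact congrFun (incidence_mulVec_edgeChain (isNClique_of_mem_faces f.2) fun d e hde hf =>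
    Consecutive.umbrella_eq ⟨hde, hf ▸ f.2⟩) x

theorem eq_of_mem_dartFaces {s : T.faces → ZMod 2} {d : T.G.Dart}
    (hs : (T.boundary *ᵥ s) (T.dartEdge d) = 0) {f g : T.faces} (hf : f ∈ T.dartFaces d)
    (hg : g ∈ T.dartFaces d) : s f = s g := by
  obtain ⟨f₁, f₂, hne, hd⟩ := card_eq_two.1 (card_dartFaces d)
  rw [boundary_mulVec_dartEdge, hd, sum_pair hne, CharTwo.add_eq_zero] at hs
  rw [hd, mem_insert, mem_singleton] at hf hg
  rcases hf with rfl | rfl <;> rcases hg with rfl | rfl <;> simp only [hs]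

theorem eq_of_mem_of_boundary_eq_zero (hU : Function.Injective T.umbrellaTail) {a : V}
    {s : T.faces → ZMod 2} (hs : ∀ d : T.G.Dart, d.fst = a → (T.boundary *ᵥ s) (T.dartEdge d) = 0)
    {f g : T.faces} (hf : a ∈ f.1) (hg : a ∈ g.1) : s f = s g := by
  obtain ⟨d, hda, hd⟩ := exists_dart_of_mem_face f hf
  obtain ⟨e, hea, he⟩ := exists_dart_of_mem_face g hg
  refine (of_consecutive_of_fst_eq hU (p := fun e => ∀ g ∈ T.dartFaces e, s f = s g) ?_ hda hea ?_
    g (by simp [hea, hg, he]))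
  · intro d e hd h hfd g hg
    obtain ⟨k, hkd, hke⟩ := h.exists_mem_dartFaces
    exact (hfd k hkd).trans (eq_of_mem_dartFaces (hs e (h.1 ▸ hd)) hke hg)
  · exact fun g => eq_of_mem_dartFaces (hs d hda) (by simp [hda, hf, hd])

theorem eq_of_boundary_eq_zero_off (hU : Function.Injective T.umbrellaTail) {S : Set V}
    (hS : (T.G.induce Sᶜ).Preconnected) {s : T.faces → ZMod 2}
    (hs : ∀ d : T.G.Dart, d.fst ∉ S → (T.boundary *ᵥ s) (T.dartEdge d) = 0) {f g : T.faces}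
    {x y : V} (hxf : x ∈ f.1) (hx : x ∉ S) (hyg : y ∈ g.1) (hy : y ∉ S) : s f = s g := by
  have hs' {a : V} (ha : a ∉ S) {f g : T.faces} (hf : a ∈ f.1) (hg : a ∈ g.1) : s f = s g :=
    eq_of_mem_of_boundary_eq_zero hU (fun d hd => hs d (hd ▸ ha)) hf hg
  refine of_preconnected_of_adj hS (p := fun a => ∀ g : T.faces, a.1 ∈ g.1 → s f = s g) ?_
    (x := ⟨x, hx⟩) (fun g hg => hs' hx hxf hg) ⟨y, hy⟩ g hyg
  intro a b hab ha g hg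
  obtain ⟨k, hk⟩ : (T.dartFaces ⟨(a.1, b.1), hab⟩).Nonempty :=
    card_pos.1 (by simp [card_dartFaces])
  rw [mem_dartFaces] at hk
  exact (ha k hk.1).trans (hs' b.2 hk.2 hg)

theorem exists_factor_sheet_of_boundary_eq_zero {D : T.faces → T.G.Dart}
    (hD : ∀ f, f ∈ T.dartFaces (D f)) {s : T.faces → ZMod 2} (hs : T.boundary *ᵥ s = 0) :
    ∃ h : T.Sheet → ZMod 2, s = h ∘ fun f => T.sheet (D f) := by
  have hne (d : T.G.Dart) : (T.dartFaces d).Nonempty := card_pos.1 (by simp [card_dartFaces])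
  choose F hF using hne
  have hs' {d : T.G.Dart} {f : T.faces} (hf : f ∈ T.dartFaces d) : s (F d) = s f :=
    eq_of_mem_dartFaces (congrFun hs _) (hF d) hf
  refine ⟨Quot.lift (s ∘ F) ?_, funext fun f => (hs' (hD f)).symm⟩
  rintro d e (h | rfl)
  · obtain ⟨f, hd, he⟩ := h.exists_mem_dartFaces
    exact (hs' hd).trans (hs' he).symm
  · exact hs' (T.dartFaces_symm d ▸ hF d.symm)

theorem exists_factor_umbrellaSheet_of_incidence_transpose_eq_zero {g : T.Umbrella → ZMod 2}
    (hg : T.incidenceᵀ *ᵥ g = 0) : ∃ h : T.Sheet → ZMod 2, g = h ∘ T.umbrellaSheet := by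
  refine ⟨Quot.lift (g ∘ T.umbrella) ?_, funext <| Quot.ind fun _ => rfl⟩
  rintro d e (h | rfl)
  · exact congrArg g h.umbrella_eq
  · rw [Function.comp_apply, Function.comp_apply, ← CharTwo.add_eq_zero,
      ← incidence_transpose_mulVec, hg, Pi.zero_apply]

variable (T)

theorem card_faces_le_rank_boundary_add :
    #T.faces ≤ T.boundary.rank + Fintype.card T.Sheet := by
  have hdart (f : T.faces) : ∃ d : T.G.Dart, f ∈ T.dartFaces d := by
    obtain ⟨a, ha⟩ : f.1.Nonempty := card_pos.1 (by simp [T.face_card f.1 f.2])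
    obtain ⟨d, rfl, hd⟩ := exists_dart_of_mem_face f ha
    exact ⟨d, mem_dartFaces.2 ⟨ha, hd⟩⟩
  choose D hD using hdart
  rw [← Fintype.card_coe]
  exact card_le_rank_add_card_of_factorsThrough _ _ fun _ =>
    exists_factor_sheet_of_boundary_eq_zero hD

theorem card_umbrella_le_rank_incidence_add :
    Fintype.card T.Umbrella ≤ T.incidence.rank + Fintype.card T.Sheet := by
  rw [← Matrix.rank_transpose]
  exact card_le_rank_add_card_of_factorsThrough _ _ fun _ =>
    exists_factor_umbrellaSheet_of_incidence_transpose_eq_zero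

theorem card_add_card_faces :
    Fintype.card V + #T.faces = Fintype.card T.G.edgeSet + 2 := by
  have h := T.euler
  rw [Set.ncard_eq_toFinset_card', Set.toFinset_card] at h
  omega

theorem card_umbrella_add_two_le :
    Fintype.card T.Umbrella + 2 ≤ Fintype.card V + 2 * Fintype.card T.Sheet := by
  have hF := T.card_faces_le_rank_boundary_add
  have hU := T.card_umbrella_le_rank_incidence_add
  have hE := Matrix.rank_add_rank_le_card_of_mul_eq_zero T.incidence_mul_boundary
  have hEuler := T.card_add_card_faces
  omega

/-- The vertices of a sheet. -/
noncomputable def sheetVerts (i : T.Sheet) : Finset V :=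
  {a | ∃ d : T.G.Dart, d.fst = a ∧ T.sheet d = i}

variable {T}

@[simp] theorem mem_sheetVerts {i : T.Sheet} {a : V} :
    a ∈ T.sheetVerts i ↔ ∃ d : T.G.Dart, d.fst = a ∧ T.sheet d = i := by
  simp [sheetVerts]

theorem fst_mem_sheetVerts (d : T.G.Dart) : d.fst ∈ T.sheetVerts (T.sheet d) :=
  mem_sheetVerts.2 ⟨d, rfl, rfl⟩

theorem snd_mem_sheetVerts (d : T.G.Dart) : d.snd ∈ T.sheetVerts (T.sheet d) :=
  mem_sheetVerts.2 ⟨d.symm, rfl, sheet_symm d⟩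

theorem subset_sheetVerts {d : T.G.Dart} {f : T.faces} (hf : f ∈ T.dartFaces d) :
    f.1 ⊆ T.sheetVerts (T.sheet d) := by
  rw [mem_dartFaces] at hf
  obtain ⟨e, he, -, hfe⟩ :=
    exists_dart_of_isNClique_three (isNClique_of_mem_faces f.2) hf.1 hf.2
  have hde : T.Consecutive d e := ⟨he.symm, hfe ▸ f.2⟩
  rw [hfe]
  simp only [insert_subset_iff, singleton_subset_iff]
  exact ⟨fst_mem_sheetVerts d, snd_mem_sheetVerts d, hde.sheet_eq ▸ snd_mem_sheetVerts e⟩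

theorem four_le_card_sheetVerts (i : T.Sheet) : 4 ≤ #(T.sheetVerts i) := by
  obtain ⟨d, rfl⟩ := Quot.exists_rep i
  obtain ⟨f, g, hfg, hd⟩ := card_eq_two.1 (card_dartFaces d)
  have hf : f.1 ⊆ T.sheetVerts (T.sheet d) := subset_sheetVerts (by simp [hd])
  have hg : g.1 ⊆ T.sheetVerts (T.sheet d) := subset_sheetVerts (by simp [hd])
  by_contra! hlt
  have hle : #(T.sheetVerts (T.sheet d)) ≤ 3 := Nat.lt_succ_iff.1 hlt
  exact hfg <| Subtype.ext <|
    (eq_of_subset_of_card_le hf (by rwa [T.face_card f.1 f.2])).trans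
      (eq_of_subset_of_card_le hg (by rwa [T.face_card g.1 g.2])).symm

variable (T) in
theorem sum_card_sheetVerts_le : ∑ i, #(T.sheetVerts i) ≤ Fintype.card T.Umbrella := by
  rw [← card_sigma]
  refine card_le_card_of_surjOn (s := univ)
    (fun x => (⟨T.umbrellaSheet x, T.umbrellaTail x⟩ : Σ _ : T.Sheet, V)) ?_
  rintro ⟨i, a⟩ h
  obtain ⟨d, rfl, rfl⟩ := mem_sheetVerts.1 (mem_sigma.1 h).2
  exact ⟨T.umbrella d, by simp, rfl⟩

theorem exists_dart_fst_eq (h4 : FourConnected T.G) (a : V) : ∃ d : T.G.Dart, d.fst = a := by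
  obtain ⟨b, hab⟩ := h4.exists_adj a
  exact ⟨⟨(a, b), hab⟩, rfl⟩

theorem four_le_card_sheetVerts_shared (h4 : FourConnected T.G) [Nontrivial T.Sheet]
    (i : T.Sheet) : 4 ≤ #{a ∈ T.sheetVerts i | ∃ j ≠ i, a ∈ T.sheetVerts j} := by
  set P := {a ∈ T.sheetVerts i | ∃ j ≠ i, a ∈ T.sheetVerts j}
  by_contra! hlt
  obtain ⟨j, hji⟩ := exists_ne i
  obtain ⟨x, hxi, hxP⟩ :=
    exists_mem_notMem_of_card_lt_card (hlt.trans_le (four_le_card_sheetVerts i))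
  obtain ⟨y, hyj, hyP⟩ :=
    exists_mem_notMem_of_card_lt_card (hlt.trans_le (four_le_card_sheetVerts j))
  have hconn := h4.2 (P : Set V) (by rw [Set.ncard_coe_finset]; omega)
  have hclosed (a b : ((P : Set V)ᶜ : Set V)) (hab : T.G.Adj a b)
      (ha : a.1 ∈ T.sheetVerts i) : b.1 ∈ T.sheetVerts i := by
    let d : T.G.Dart := ⟨(a, b), hab⟩
    have hd : T.sheet d = i := by
      by_contra hne
      exact a.2 (mem_coe.2 (mem_filter.2 ⟨ha, _, hne, fst_mem_sheetVerts d⟩))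
    exact hd ▸ snd_mem_sheetVerts d
  have hyi : y ∈ T.sheetVerts i := of_preconnected_of_adj hconn.preconnected
    (p := fun a => a.1 ∈ T.sheetVerts i) hclosed (x := ⟨x, by simpa using hxP⟩) hxi
    ⟨y, by simpa using hyP⟩
  exact hyP (mem_filter.2 ⟨hyi, j, hji, hyj⟩)

theorem subsingleton_sheet (h4 : FourConnected T.G) : Subsingleton T.Sheet := by
  by_contra hns
  have : Nontrivial T.Sheet := not_subsingleton_iff_nontrivial.1 hns
  have hcover (a : V) : ∃ i, a ∈ T.sheetVerts i := by
    obtain ⟨d, rfl⟩ := exists_dart_fst_eq h4 a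
    exact ⟨_, fst_mem_sheetVerts d⟩
  have hcount := mul_card_add_two_mul_card_le hcover (four_le_card_sheetVerts_shared h4)
  have hsum := T.sum_card_sheetVerts_le
  have hrank := T.card_umbrella_add_two_le
  omega

theorem umbrellaTail_bijective (h4 : FourConnected T.G) :
    Function.Bijective T.umbrellaTail := by
  have hsurj : Function.Surjective T.umbrellaTail := fun a => by
    obtain ⟨d, rfl⟩ := exists_dart_fst_eq h4 a
    exact ⟨T.umbrella d, rfl⟩
  refine (Fintype.bijective_iff_surjective_and_card _).2 ⟨hsurj, ?_⟩
  have := Fintype.card_le_of_surjective _ hsurj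
  have := T.card_umbrella_add_two_le
  have := Fintype.card_le_one_iff_subsingleton.2 (subsingleton_sheet h4)
  omega

theorem exists_boundary_mulVec_eq (h4 : FourConnected T.G) {z : T.G.edgeSet → ZMod 2}
    (hz : T.incidence *ᵥ z = 0) : ∃ s, T.boundary *ᵥ s = z := by
  have hle : LinearMap.range T.boundary.mulVecLin ≤ LinearMap.ker T.incidence.mulVecLin := by
    rintro _ ⟨s, rfl⟩
    simp [incidence_mul_boundary]
  have hfinrank : Module.finrank (ZMod 2) (LinearMap.ker T.incidence.mulVecLin) ≤
      Module.finrank (ZMod 2) (LinearMap.range T.boundary.mulVecLin) := by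
    have hF := T.card_faces_le_rank_boundary_add
    have hU := T.card_umbrella_le_rank_incidence_add
    have hE := T.incidence.mulVecLin.finrank_range_add_finrank_ker
    have hEuler := T.card_add_card_faces
    have hV := Fintype.card_of_bijective (umbrellaTail_bijective h4)
    have hS := Fintype.card_le_one_iff_subsingleton.2 (subsingleton_sheet h4)
    rw [Module.finrank_fintype_fun_eq_card] at hE
    rw [Matrix.rank] at hF hU
    omega
  have hmem : z ∈ LinearMap.range T.boundary.mulVecLin :=
    Submodule.eq_of_le_of_finrank_le hle hfinrank ▸ hz
  exact hmem

theorem mem_faces_of_isNClique_three (h4 : FourConnected T.G) {t : Finset V}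
    (ht : T.G.IsNClique 3 t) : t ∈ T.faces := by
  have hU := (umbrellaTail_bijective h4).injective
  obtain ⟨s, hs⟩ :=
    exists_boundary_mulVec_eq h4 (incidence_mulVec_edgeChain ht fun d e hde _ => hU hde)
  by_contra hmem
  have houtside (f : T.faces) : ∃ x ∈ f.1, x ∉ t := by
    refine not_subset.1 fun hsub => hmem ?_
    rw [← eq_of_subset_of_card_le hsub (by rw [ht.card_eq, T.face_card f.1 f.2])]
    exact f.2
  have hconst (f g : T.faces) : s f = s g := by
    obtain ⟨x, hxf, hx⟩ := houtside f
    obtain ⟨y, hyg, hy⟩ := houtside g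
    have hconn := h4.2 (t : Set V) (by rw [Set.ncard_coe_finset, ht.card_eq])
    refine eq_of_boundary_eq_zero_off hU hconn.preconnected (fun d hd => ?_) hxf hx hyg hy
    rw [hs, edgeChain_dartEdge, if_neg fun h => hd h.1]
  obtain ⟨a, b, c, hab, -, -, rfl⟩ := SimpleGraph.is3Clique_iff.1 ht
  have hone : (T.boundary *ᵥ s) (T.dartEdge ⟨(a, b), hab⟩) = 1 := by
    rw [hs, edgeChain_dartEdge, if_pos (by simp)]
  obtain ⟨f, g, hfg, hd⟩ := card_eq_two.1 (card_dartFaces (T := T) ⟨(a, b), hab⟩)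
  rw [boundary_mulVec_dartEdge, hd, sum_pair hfg, hconst f g, CharTwo.add_self_eq_zero] at hone
  exact zero_ne_one hone

theorem preconnected_induce_neighborSet (hU : Function.Injective T.umbrellaTail) (v : V) :
    (T.G.induce (T.G.neighborSet v)).Preconnected := by
  intro x y
  let p (d : T.G.Dart) : Prop :=
    ∃ h : d.snd ∈ T.G.neighborSet v, (T.G.induce (T.G.neighborSet v)).Reachable x ⟨d.snd, h⟩
  suffices p ⟨(v, y), y.2⟩ from this.2
  refine of_consecutive_of_fst_eq hU (p := p) (d := ⟨(v, x), x.2⟩) ?_ rfl rfl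
    ⟨x.2, SimpleGraph.Reachable.refl _⟩
  rintro d e rfl ⟨hde, hf⟩ ⟨h, hr⟩
  have he : e.snd ∈ T.G.neighborSet d.fst := hde ▸ e.adj
  refine ⟨he, ?_⟩
  obtain heq | hne := eq_or_ne d.snd e.snd
  · simpa only [heq] using hr
  · have hadj : (T.G.induce (T.G.neighborSet d.fst)).Adj ⟨d.snd, h⟩ ⟨e.snd, he⟩ :=
      T.face_clique _ hf _ (by simp) _ (by simp) hne
    exact hr.trans hadj.reachable

theorem ncard_neighborSet_induce_neighborSet (htri : ∀ t, T.G.IsNClique 3 t → t ∈ T.faces) (v : V)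
    (a : T.G.neighborSet v) :
    ((T.G.induce (T.G.neighborSet v)).neighborSet a).ncard = 2 := by
  rw [← T.edge_two_faces v a a.2, ← Set.ncard_coe_finset]
  refine Set.ncard_congr (fun w _ => {v, a.1, w.1}) ?_ ?_ ?_
  · intro w haw
    have hmem := htri {v, a.1, w.1} (SimpleGraph.is3Clique_triple_iff.2 ⟨a.2, w.2, haw⟩)
    simpa using hmem
  · intro w w' haw _ h
    have hw : w.1 ∈ ({v, a.1, w'.1} : Finset V) := h ▸ by simp
    have hwv : w.1 ≠ v := SimpleGraph.Adj.ne' w.2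
    have hwa : w.1 ≠ a.1 := SimpleGraph.Adj.ne' haw
    exact Subtype.ext (by simpa [hwv, hwa] using hw)
  · intro f hf
    obtain ⟨hfT, hv, ha⟩ : f ∈ T.faces ∧ v ∈ f ∧ a.1 ∈ f := by simpa using hf
    obtain ⟨⟨⟨u, w⟩, hvw⟩, rfl, hwa, rfl⟩ :=
      exists_dart_of_isNClique_three (isNClique_of_mem_faces hfT) (d := ⟨(v, a), a.2⟩) hv ha
    exact ⟨⟨w, hvw⟩, T.face_clique _ hfT _ ha _ (by simp) (Ne.symm hwa), rfl⟩

theorem isPathGraph_induce_neighborSet_diff_singleton (h4 : FourConnected T.G) {v n : V}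
    (hn : n ∈ T.G.neighborSet v) : IsPathGraph (T.G.induce (T.G.neighborSet v \ {n})) := by
  have hconn : (T.G.induce (T.G.neighborSet v)).Connected :=
    { preconnected := preconnected_induce_neighborSet (umbrellaTail_bijective h4).injective v
      nonempty := ⟨⟨n, hn⟩⟩ }
  have h2 := ncard_neighborSet_induce_neighborSet (fun _ => mem_faces_of_isNClique_three h4) v
  exact (isPathGraph_induce_compl_singleton hconn h2 ⟨n, hn⟩).of_iso
    (induceDiffSingletonIso T.G hn)

end PlaneTriangulation

theorem stmt15_general {V : Type*} [Fintype V] [DecidableEq V] (T : PlaneTriangulation V)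
    {B : Set V} (hB : T.G.IsIndepSet B) (h4 : FourConnected T.G) {v n : V}
    (hn : n ∈ T.G.neighborSet v) :
    InducesStar T.G ((T.G.neighborSet v ∩ B) ∪ {v}) v ∧
    IsPathGraph (T.G.induce (T.G.neighborSet v \ {n})) :=
  ⟨inducesStar_neighborSet_inter_union hB v,
    T.isPathGraph_induce_neighborSet_diff_singleton h4 hn⟩

/-- In a 4-connected plane triangulation with proper 3-colouring `{B, W, R}`, for a
white vertex `v` with a red neighbour `n`, the set `(N(v) ∩ B) ∪ {v}` induces a star
with centre `v`, and the set `N(v) \ {n}` induces a path. -/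
theorem stmt15 {V : Type*} [Fintype V] [DecidableEq V] (T : PlaneTriangulation V)
    (B W R : Set V)
    (hPart : B ∪ W ∪ R = Set.univ)
    (hBW : Disjoint B W) (hBR : Disjoint B R) (hWR : Disjoint W R)
    (hB : ∀ a ∈ B, ∀ b ∈ B, ¬ T.G.Adj a b)
    (hW : ∀ a ∈ W, ∀ b ∈ W, ¬ T.G.Adj a b)
    (hRind : ∀ a ∈ R, ∀ b ∈ R, ¬ T.G.Adj a b)
    (h4 : FourConnected T.G)
    (v : V) (hv : v ∈ W) (n : V) (hnR : n ∈ R) (hn : n ∈ T.G.neighborSet v) :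
    InducesStar T.G ((T.G.neighborSet v ∩ B) ∪ {v}) v ∧
    IsPathGraph (T.G.induce (T.G.neighborSet v \ {n})) :=
  stmt15_general T (fun a ha b hb _ => hB a ha b hb) h4 hn
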